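/- Let Σ be a CNF theory and V ⊆ 𝒜. If Σ is Horn expressible (respectively: Krom expressible, Horn renamable expressible, q-Horn expressible), then Forget(Σ, V) is Horn expressible (respectively: Krom expressible, Horn renamable expressible, q-Horn expressible). -/

import Mathlib

variable {α : Type*} [Fintype α] [DecidableEq α]

/-- A clause (or term): a finite set of literals, where a literal is an atom
paired with a polarity (`true` = positive occurrence, `false` = negated). -/
abbrev Clause (α : Type*) := Finset (α × Bool)

/-- A finite set of literals is a legal clause/term if it contains no
complementary pair of literals. -/
def IsClause (c : Clause α) : Prop := ∀ p : α, ¬((p, true) ∈ c ∧ (p, false) ∈ c)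

instance : DecidablePred (IsClause (α := α)) := fun c =>
  decidable_of_iff (∀ p : α, ¬((p, true) ∈ c ∧ (p, false) ∈ c)) Iff.rfl

/-- The atoms occurring in a clause/term. -/
def varsC (c : Clause α) : Finset α := c.image Prod.fst

/-- The atoms occurring positively in a clause/term. -/
def posC (c : Clause α) : Finset α := (c.filter fun l => l.2 = true).image Prod.fst

/-- The atoms occurring negatively in a clause/term. -/
def negC (c : Clause α) : Finset α := (c.filter fun l => l.2 = false).image Prod.fst

/-- The resolvent of two clauses on atom `p`. -/
def res (c c' : Clause α) (p : α) : Clause α :=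
  (c ∪ c') \ ({(p, true), (p, false)} : Finset (α × Bool))

/-- `c` and `c'` are resolvable on atom `p`: `p` occurs in one of them and `¬p` in
the other, and the resolvent contains no complementary pair of literals. -/
def ResolvableOn (c c' : Clause α) (p : α) : Prop :=
  ((p, true) ∈ c ∧ (p, false) ∈ c' ∨ (p, false) ∈ c ∧ (p, true) ∈ c') ∧ IsClause (res c c' p)

/-- Renaming of a literal: flip the polarity of atoms in `V`. -/
def renLit (V : Finset α) (l : α × Bool) : α × Bool := if l.1 ∈ V then (l.1, !l.2) else l

/-- Renaming of a clause w.r.t. the atoms in `V`. -/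
def renClause (V : Finset α) (c : Clause α) : Clause α := c.image (renLit V)

/-- Renaming of a CNF theory w.r.t. the atoms in `V`. -/
def renTheory (V : Finset α) (T : Finset (Clause α)) : Finset (Clause α) := T.image (renClause V)

/-- A Horn clause: at most one positive literal. -/
def HornClause (c : Clause α) : Prop := (posC c).card ≤ 1

/-- A Horn theory: a finite set of Horn clauses. -/
def IsHornTheory (T : Finset (Clause α)) : Prop := ∀ c ∈ T, HornClause c

/-- A Krom theory: each clause contains at most 2 literals. -/
def IsKromTheory (T : Finset (Clause α)) : Prop := ∀ c ∈ T, c.card ≤ 2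

/-- `T` is Horn renamable: some renaming of `T` is a Horn theory. -/
def IsRenHorn (T : Finset (Clause α)) : Prop := ∃ V : Finset α, IsHornTheory (renTheory V T)

/-- The QH-conditions for sets of atoms `Q`, `H` and a clause `c`. -/
def QHcond (Q H : Finset α) (c : Clause α) : Prop :=
  (varsC c ∩ Q).card ≤ 2 ∧ (posC c ∩ H).card ≤ 1 ∧
    ((posC c ∩ H).card = 1 → varsC c ∩ Q = ∅)

/-- The atoms occurring in a CNF theory. -/
def varsT (T : Finset (Clause α)) : Finset α := T.sup varsC

/-- `T` has a QH-partition: a partition `{Q, H}` of its atoms satisfying the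
QH-conditions for each of its clauses. -/
def HasQHPartition (T : Finset (Clause α)) : Prop :=
  ∃ Q H : Finset α, Q ∩ H = ∅ ∧ Q ∪ H = varsT T ∧ ∀ c ∈ T, QHcond Q H c

/-- `T` is q-Horn: some renaming of `T` has a QH-partition. -/
def IsQHorn (T : Finset (Clause α)) : Prop := ∃ V : Finset α, HasQHPartition (renTheory V T)

/-- Satisfaction of a literal by an interpretation (a set of atoms). -/
def litSat (I : Set α) (l : α × Bool) : Prop := if l.2 then l.1 ∈ I else l.1 ∉ I

/-- Satisfaction of a clause (read disjunctively). -/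
def clauseSat (I : Set α) (c : Clause α) : Prop := ∃ l ∈ c, litSat I l

/-- Satisfaction of a term (read conjunctively). -/
def termSat (I : Set α) (t : Clause α) : Prop := ∀ l ∈ t, litSat I l

/-- Satisfaction of a CNF theory. -/
def cnfSat (I : Set α) (T : Finset (Clause α)) : Prop := ∀ c ∈ T, clauseSat I c

/-- One step of the resolution closure. -/
def resStep (S : Set (Clause α)) : Set (Clause α) :=
  S ∪ {d | ∃ c ∈ S, ∃ c' ∈ S, ∃ p : α, ResolvableOn c c' p ∧ d = res c c' p}

/-- The iterated resolution closure `res^n_T`. -/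
def resIter (T : Finset (Clause α)) : ℕ → Set (Clause α)
  | 0 => (↑T : Set (Clause α))
  | n + 1 => resStep (resIter T n)

/-- Propositional formulas over atoms `α`. -/
inductive PropForm (α : Type*) where
  | var : α → PropForm α
  | tru : PropForm α
  | fls : PropForm α
  | neg : PropForm α → PropForm α
  | conj : PropForm α → PropForm α → PropForm α
  | disj : PropForm α → PropForm α → PropForm α

namespace PropForm

/-- Satisfaction of a formula by an interpretation. -/
def Sat (I : Set α) : PropForm α → Prop
  | var p => p ∈ I
  | tru => True
  | fls => False
  | neg φ => ¬ Sat I φ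
  | conj φ ψ => Sat I φ ∧ Sat I ψ
  | disj φ ψ => Sat I φ ∨ Sat I ψ

/-- Logical equivalence: same models. -/
def equivalent (φ ψ : PropForm α) : Prop := ∀ I : Set α, Sat I φ ↔ Sat I ψ

/-- Entailment: every model of `φ` is a model of `ψ`. -/
def entails (φ ψ : PropForm α) : Prop := ∀ I : Set α, Sat I φ → Sat I ψ

/-- The atoms occurring in a formula. -/
def vars : PropForm α → Finset α
  | var p => {p}
  | tru => ∅
  | fls => ∅
  | neg φ => vars φ
  | conj φ ψ => vars φ ∪ vars ψ
  | disj φ ψ => vars φ ∪ vars ψ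

/-- Substitution of the formula `χ` for the atom `p`. -/
def subst (p : α) (χ : PropForm α) : PropForm α → PropForm α
  | var q => if q = p then χ else var q
  | tru => tru
  | fls => fls
  | neg φ => neg (subst p χ φ)
  | conj φ ψ => conj (subst p χ φ) (subst p χ ψ)
  | disj φ ψ => disj (subst p χ φ) (subst p χ ψ)

/-- Forgetting a single atom: `Forget(φ, {p}) = φ[p/⊤] ∨ φ[p/⊥]`. -/
def forget1 (φ : PropForm α) (p : α) : PropForm α := disj (subst p tru φ) (subst p fls φ)

/-- Forgetting a set of atoms (presented as a list), one atom at a time: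
`Forget(φ, ∅) = φ` and `Forget(φ, V ∪ {p}) = Forget(Forget(φ, {p}), V)`. -/
def Forget : PropForm α → List α → PropForm α
  | φ, [] => φ
  | φ, p :: V => Forget (forget1 φ p) V

/-- Renaming of a formula: replace each occurrence of an atom `p ∈ V` by `¬p`. -/
def renForm (V : Finset α) : PropForm α → PropForm α
  | var p => if p ∈ V then neg (var p) else var p
  | tru => tru
  | fls => fls
  | neg φ => neg (renForm V φ)
  | conj φ ψ => conj (renForm V φ) (renForm V ψ)
  | disj φ ψ => disj (renForm V φ) (renForm V ψ)

/-- `φ` is irrelevant to the atoms in `V`: it is equivalent to a formula not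
mentioning any atom of `V`. -/
def IR (φ : PropForm α) (V : List α) : Prop :=
  ∃ φ' : PropForm α, equivalent φ φ' ∧ ∀ p ∈ V, p ∉ vars φ'

end PropForm

/-- The formula corresponding to a literal. -/
def litToForm (l : α × Bool) : PropForm α :=
  if l.2 then PropForm.var l.1 else PropForm.neg (PropForm.var l.1)

/-- The disjunction of the literals of a clause. -/
noncomputable def clauseToForm (c : Clause α) : PropForm α :=
  c.toList.foldr (fun l φ => PropForm.disj (litToForm l) φ) PropForm.fls

/-- The conjunction of the clauses of a CNF theory. -/
noncomputable def cnfToForm (T : Finset (Clause α)) : PropForm α :=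
  T.toList.foldr (fun c φ => PropForm.conj (clauseToForm c) φ) PropForm.tru

/-- `φ` is Horn expressible. -/
def HornExpressible (φ : PropForm α) : Prop :=
  ∃ T : Finset (Clause α), (∀ c ∈ T, IsClause c) ∧ IsHornTheory T ∧
    PropForm.equivalent φ (cnfToForm T)

/-- `φ` is Krom expressible. -/
def KromExpressible (φ : PropForm α) : Prop :=
  ∃ T : Finset (Clause α), (∀ c ∈ T, IsClause c) ∧ IsKromTheory T ∧
    PropForm.equivalent φ (cnfToForm T)

/-- `φ` is renamable-Horn expressible. -/
def RenHornExpressible (φ : PropForm α) : Prop :=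
  ∃ T : Finset (Clause α), (∀ c ∈ T, IsClause c) ∧ IsRenHorn T ∧
    PropForm.equivalent φ (cnfToForm T)

/-- `φ` is q-Horn expressible. -/
def QHornExpressible (φ : PropForm α) : Prop :=
  ∃ T : Finset (Clause α), (∀ c ∈ T, IsClause c) ∧ IsQHorn T ∧
    PropForm.equivalent φ (cnfToForm T)

/-- A formula entails a clause. -/
def EntailsClause (φ : PropForm α) (c : Clause α) : Prop :=
  ∀ I : Set α, PropForm.Sat I φ → clauseSat I c

/-- A prime implicate of a formula. -/
def IsPrimeImplicate (φ : PropForm α) (c : Clause α) : Prop :=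
  IsClause c ∧ EntailsClause φ c ∧ ∀ c' ⊂ c, ¬ EntailsClause φ c'

/-- A term entails a formula. -/
def TermEntails (t : Clause α) (φ : PropForm α) : Prop :=
  ∀ I : Set α, termSat I t → PropForm.Sat I φ

/-- A prime implicant of a formula. -/
def IsPrimeImplicant (φ : PropForm α) (t : Clause α) : Prop :=
  IsClause t ∧ TermEntails t φ ∧ ∀ t' ⊂ t, ¬ TermEntails t' φ

/-- A CNF theory entails a clause. -/
def TheoryEntailsClause (T : Finset (Clause α)) (c : Clause α) : Prop :=
  ∀ I : Set α, cnfSat I T → clauseSat I c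

/-- A prime implicate of a CNF theory. -/
def IsPrimeImplicateT (T : Finset (Clause α)) (c : Clause α) : Prop :=
  IsClause c ∧ TheoryEntailsClause T c ∧ ∀ c' ⊂ c, ¬ TheoryEntailsClause T c'

/-- The set of prime implicates of a CNF theory, as a finite theory. -/
noncomputable def PI (T : Finset (Clause α)) : Finset (Clause α) :=
  (Set.toFinite {c : Clause α | IsPrimeImplicateT T c}).toFinset

/-- Strong unfolding of a CNF theory w.r.t. an atom `p`: keep the clauses not
mentioning `p`, and replace the clauses containing the positive literal `p` by all
their resolvents with clauses containing `¬p`; clauses containing `¬p` are removed. -/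
def unfold1 (T : Finset (Clause α)) (p : α) : Finset (Clause α) :=
  T.filter (fun c => (p, true) ∉ c ∧ (p, false) ∉ c) ∪
    ((T ×ˢ T).filter fun cc =>
        (p, true) ∈ cc.1 ∧ (p, false) ∈ cc.2 ∧ IsClause (res cc.1 cc.2 p)).image
      fun cc => res cc.1 cc.2 p

/-- Iterated strong unfolding w.r.t. a set of atoms (presented as a list):
`unfold(T, ∅) = T` and `unfold(T, V ∪ {p}) = unfold(unfold(T, p), V)`. -/
def unfoldList (T : Finset (Clause α)) : List α → Finset (Clause α)
  | [] => T
  | p :: V => unfoldList (unfold1 T p) V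

/-!
Forgetting `p` in a CNF theory amounts to resolving on `p` in all possible ways and then discarding
the clauses that mention `p`. Hence expressibility by clauses from any class closed under resolution
survives forgetting. Horn clauses, Krom clauses and, for fixed `Q` and `H`, clauses with atoms in
`Q ∪ H` satisfying the QH-conditions are three such classes. Renaming commutes with resolution, so
fixing a renaming that makes a theory Horn or q-Horn yields a class closed under resolution again.
-/

section Semantics

variable {β γ : Type*} {I : Set β} {p : β}

namespace PropForm

theorem sat_foldr_disj (f : γ → PropForm β) (L : List γ) :
    Sat I (L.foldr (fun x φ => disj (f x) φ) fls) ↔ ∃ x ∈ L, Sat I (f x) := by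
  induction L with
  | nil => simp [Sat]
  | cons x L ih => simp [Sat, ih]

theorem sat_foldr_conj (f : γ → PropForm β) (L : List γ) :
    Sat I (L.foldr (fun x φ => conj (f x) φ) tru) ↔ ∀ x ∈ L, Sat I (f x) := by
  induction L with
  | nil => simp [Sat]
  | cons x L ih => simp [Sat, ih]

end PropForm

theorem sat_litToForm (l : β × Bool) : (litToForm l).Sat I ↔ litSat I l := by
  unfold litToForm litSat
  split <;> rfl

theorem sat_clauseToForm (c : Clause β) : (clauseToForm c).Sat I ↔ clauseSat I c := by
  simp only [clauseToForm, PropForm.sat_foldr_disj, sat_litToForm, Finset.mem_toList, clauseSat]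

theorem sat_cnfToForm (T : Finset (Clause β)) : (cnfToForm T).Sat I ↔ cnfSat I T := by
  simp only [cnfToForm, PropForm.sat_foldr_conj, sat_clauseToForm, Finset.mem_toList, cnfSat]

theorem clauseSat_of_not_isClause {c : Clause β} (hc : ¬ IsClause c) : clauseSat I c := by
  obtain ⟨q, hpos, hneg⟩ : ∃ q, (q, true) ∈ c ∧ (q, false) ∈ c := by
    simpa only [IsClause, not_forall, not_not] using hc
  by_cases hq : q ∈ I
  · exact ⟨(q, true), hpos, by simpa [litSat] using hq⟩
  · exact ⟨(q, false), hneg, by simpa [litSat] using hq⟩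

end Semantics

section Forgetting

variable {β : Type*} [DecidableEq β] {I : Set β} {p : β} {c c' : Clause β}
  {T : Finset (Clause β)} {φ : PropForm β}

namespace PropForm

theorem sat_subst (χ φ : PropForm β) :
    Sat I (subst p χ φ) ↔ Sat {q | if q = p then Sat I χ else q ∈ I} φ := by
  induction φ with
  | var q => by_cases h : q = p <;> simp [subst, Sat, h]
  | tru | fls => rfl
  | neg φ ih => exact not_congr ih
  | conj φ ψ ihφ ihψ => exact and_congr ihφ ihψ
  | disj φ ψ ihφ ihψ => exact or_congr ihφ ihψ

theorem sat_forget1 (φ : PropForm β) :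
    Sat I (forget1 φ p) ↔ Sat (insert p I) φ ∨ Sat (I \ {p}) φ := by
  have h_tru : {q | if q = p then Sat I tru else q ∈ I} = insert p I := by
    ext q
    by_cases h : q = p <;> simp [Sat, h]
  have h_fls : {q | if q = p then Sat I fls else q ∈ I} = I \ {p} := by
    ext q
    by_cases h : q = p <;> simp [Sat, h]
  rw [forget1, Sat, sat_subst, sat_subst, h_tru, h_fls]

end PropForm

/-- The clause `c` with both literals on the atom `p` deleted; it expresses what is left of `c`
once `p` has been given a value that falsifies its literal in `c`. -/
def deleteAtom (p : β) (c : Clause β) : Clause β := c.filter fun l => l.1 ≠ p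

theorem deleteAtom_eq_self (hpos : (p, true) ∉ c) (hneg : (p, false) ∉ c) :
    deleteAtom p c = c := by
  refine Finset.filter_true_of_mem ?_
  rintro ⟨q, _ | _⟩ hl rfl
  exacts [hneg hl, hpos hl]

theorem res_eq_union_deleteAtom (c c' : Clause β) (p : β) :
    res c c' p = deleteAtom p c ∪ deleteAtom p c' := by
  ext ⟨q, _ | _⟩ <;> simp [res, deleteAtom, or_and_right]

theorem clauseSat_res :
    clauseSat I (res c c' p) ↔ clauseSat I (deleteAtom p c) ∨ clauseSat I (deleteAtom p c') := by
  simp only [clauseSat, res_eq_union_deleteAtom, Finset.mem_union, or_and_right, exists_or]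

theorem clauseSat_iff_of_agree_off {J : Set β} (hJ : ∀ q ≠ p, q ∈ J ↔ q ∈ I) :
    clauseSat J c ↔ (∃ b, (p, b) ∈ c ∧ litSat J (p, b)) ∨ clauseSat I (deleteAtom p c) := by
  have hlit : ∀ l : β × Bool, l.1 ≠ p → (litSat J l ↔ litSat I l) := fun l hl => by
    simp only [litSat, hJ _ hl]
  constructor
  · rintro ⟨⟨q, b⟩, hl, hsat⟩
    by_cases hq : q = p
    · subst hq
      exact .inl ⟨b, hl, hsat⟩
    · exact .inr ⟨(q, b), Finset.mem_filter.2 ⟨hl, hq⟩, (hlit _ hq).1 hsat⟩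
  · rintro (⟨b, hl, hsat⟩ | ⟨l, hl, hsat⟩)
    · exact ⟨(p, b), hl, hsat⟩
    · obtain ⟨hl, hq⟩ := Finset.mem_filter.1 hl
      exact ⟨l, hl, (hlit l hq).2 hsat⟩

theorem clauseSat_insert :
    clauseSat (insert p I) c ↔ (p, true) ∈ c ∨ clauseSat I (deleteAtom p c) := by
  rw [clauseSat_iff_of_agree_off (p := p) (I := I) fun q hq => by simp [hq]]
  simp [litSat]

theorem clauseSat_sdiff_singleton :
    clauseSat (I \ {p}) c ↔ (p, false) ∈ c ∨ clauseSat I (deleteAtom p c) := by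
  rw [clauseSat_iff_of_agree_off (p := p) (I := I) fun q hq => by simp [hq]]
  simp [litSat]

open Classical in
/-- Strong unfolding of `T` with respect to `p`, as in `unfold1` but for possibly infinitely many
atoms: `IsClause` is decided classically instead of by running through all atoms. -/
noncomputable def strongUnfolding (T : Finset (Clause β)) (p : β) : Finset (Clause β) :=
  {c ∈ T | (p, true) ∉ c ∧ (p, false) ∉ c} ∪
    {d ∈ Finset.image₂ (res · · p) {c ∈ T | (p, true) ∈ c} {c ∈ T | (p, false) ∈ c} | IsClause d}

theorem forall_mem_strongUnfolding {P : Clause β → Prop} :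
    (∀ d ∈ strongUnfolding T p, P d) ↔
      (∀ c ∈ T, (p, true) ∉ c → (p, false) ∉ c → P c) ∧
        ∀ c ∈ T, (p, true) ∈ c → ∀ c' ∈ T, (p, false) ∈ c' → IsClause (res c c' p) →
          P (res c c' p) := by
  simp only [strongUnfolding, Finset.forall_mem_union, Finset.mem_filter, and_imp,
    Finset.forall_mem_image₂]

theorem cnfSat_strongUnfolding (hT : ∀ c ∈ T, IsClause c) :
    cnfSat I (strongUnfolding T p) ↔ cnfSat (insert p I) T ∨ cnfSat (I \ {p}) T := by
  simp only [cnfSat, forall_mem_strongUnfolding, clauseSat_insert, clauseSat_sdiff_singleton]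
  constructor
  · rintro ⟨hkeep, hres⟩
    by_contra! ⟨⟨c', hc', hpos', hfail'⟩, ⟨c, hc, hneg, hfail⟩⟩
    have hneg' : (p, false) ∈ c' := by
      by_contra h
      exact hfail' (by simpa only [deleteAtom_eq_self hpos' h] using hkeep c' hc' hpos' h)
    have hpos : (p, true) ∈ c := by
      by_contra h
      exact hfail (by simpa only [deleteAtom_eq_self h hneg] using hkeep c hc h hneg)
    have hsat : clauseSat I (res c c' p) := by
      by_cases h : IsClause (res c c' p)
      · exact hres c hc hpos c' hc' hneg' h
      · exact clauseSat_of_not_isClause h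
    exact (clauseSat_res.1 hsat).elim hfail hfail'
  · intro h
    refine ⟨fun c hc hpos hneg => ?_, fun c hc hpos c' hc' hneg' _ => clauseSat_res.2 ?_⟩
    · rw [← deleteAtom_eq_self hpos hneg]
      exact h.elim (fun h => (h c hc).resolve_left hpos) fun h => (h c hc).resolve_left hneg
    · exact h.symm.imp (fun h => (h c hc).resolve_left fun hneg => hT c hc p ⟨hpos, hneg⟩)
        fun h => (h c' hc').resolve_left fun hpos' => hT c' hc' p ⟨hpos', hneg'⟩

/-- A class of clauses closed under resolution. Resolvents containing complementary literals are
included, so that the condition does not refer to `IsClause`. -/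
def ResolutionClosed (C : Clause β → Prop) : Prop :=
  ∀ ⦃c c' : Clause β⦄ ⦃p : β⦄, (p, true) ∈ c → (p, false) ∈ c' → C c → C c' → C (res c c' p)

/-- `φ` is equivalent to a CNF theory all of whose clauses belong to the class `C`; the common form
of the four notions of expressibility. -/
def ExpressibleBy (C : Clause β → Prop) (φ : PropForm β) : Prop :=
  ∃ T : Finset (Clause β), (∀ c ∈ T, IsClause c) ∧ (∀ c ∈ T, C c) ∧ φ.equivalent (cnfToForm T)

namespace ExpressibleBy

variable {C : Clause β → Prop}

theorem forget1 (hC : ResolutionClosed C) (p : β) (h : ExpressibleBy C φ) :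
    ExpressibleBy C (φ.forget1 p) := by
  obtain ⟨T, hT, hTC, hφ⟩ := h
  have hclause : ∀ d ∈ strongUnfolding T p, IsClause d :=
    forall_mem_strongUnfolding.2 ⟨fun c hc _ _ => hT c hc, fun _ _ _ _ _ _ hres => hres⟩
  have hclass : ∀ d ∈ strongUnfolding T p, C d :=
    forall_mem_strongUnfolding.2 ⟨fun c hc _ _ => hTC c hc,
      fun c hc hpos c' hc' hneg' _ => hC hpos hneg' (hTC c hc) (hTC c' hc')⟩
  refine ⟨strongUnfolding T p, hclause, hclass, fun I => ?_⟩
  rw [PropForm.sat_forget1, hφ, hφ]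
  simp only [sat_cnfToForm, cnfSat_strongUnfolding hT]

theorem forget (hC : ResolutionClosed C) (V : List β) (h : ExpressibleBy C φ) :
    ExpressibleBy C (φ.Forget V) := by
  induction V generalizing φ with
  | nil => exact h
  | cons p _ ih => exact ih (h.forget1 hC p)

end ExpressibleBy

end Forgetting

section ResolutionClosed

variable {β : Type*} [DecidableEq β] {c c' d : Clause β} {p : β} {Q H Q' H' W : Finset β}

theorem mem_posC : p ∈ posC c ↔ (p, true) ∈ c := by
  simp [posC]

theorem mem_varsC : p ∈ varsC c ↔ ∃ b, (p, b) ∈ c := by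
  simp [varsC]

theorem posC_subset_varsC : posC c ⊆ varsC c := fun _ hp => mem_varsC.2 ⟨true, mem_posC.1 hp⟩

theorem mem_res {l : β × Bool} : l ∈ res c c' p ↔ (l ∈ c ∨ l ∈ c') ∧ l.1 ≠ p := by
  simp only [res_eq_union_deleteAtom, deleteAtom, Finset.mem_union, Finset.mem_filter,
    or_and_right]

theorem posC_res : posC (res c c' p) = (posC c).erase p ∪ (posC c').erase p := by
  ext q
  simp only [mem_posC, mem_res, Finset.mem_union, Finset.mem_erase]
  tauto

theorem varsC_res : varsC (res c c' p) = (varsC c).erase p ∪ (varsC c').erase p := by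
  ext q
  simp only [mem_varsC, mem_res, Finset.mem_union, Finset.mem_erase, exists_and_right, exists_or]
  tauto

theorem resolutionClosed_hornClause : ResolutionClosed (HornClause (α := β)) := by
  intro c c' p hpos _ hc hc'
  have hcp : (posC c).erase p = ∅ := by
    rw [← Finset.card_eq_zero, Finset.card_erase_of_mem (mem_posC.2 hpos)]
    exact Nat.sub_eq_zero_of_le hc
  calc (posC (res c c' p)).card
      = ((posC c').erase p).card := by rw [posC_res, hcp, Finset.empty_union]
    _ ≤ (posC c').card := Finset.card_erase_le
    _ ≤ 1 := hc'

theorem resolutionClosed_card_le_two : ResolutionClosed fun c : Clause β => c.card ≤ 2 := by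
  intro c c' p hpos hneg' hc hc'
  have hsub : res c c' p ⊆ c.erase (p, true) ∪ c'.erase (p, false) := by
    rintro l hl
    obtain ⟨hl, hlp⟩ := mem_res.1 hl
    simp only [Finset.mem_union, Finset.mem_erase]
    exact hl.imp (⟨ne_of_apply_ne Prod.fst hlp, ·⟩) (⟨ne_of_apply_ne Prod.fst hlp, ·⟩)
  have hcard := (Finset.card_le_card hsub).trans (Finset.card_union_le _ _)
  rw [Finset.card_erase_of_mem hpos, Finset.card_erase_of_mem hneg'] at hcard
  lia

namespace QHcond

theorem of_subset (h : QHcond Q H c) (hQ : varsC d ∩ Q' ⊆ varsC c ∩ Q)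
    (hH : posC d ∩ H' ⊆ posC c ∩ H) : QHcond Q' H' d := by
  have hcard := Finset.card_le_card hH
  refine ⟨(Finset.card_le_card hQ).trans h.1, hcard.trans h.2.1, fun hone => ?_⟩
  exact Finset.subset_empty.1 (hQ.trans (h.2.2 (le_antisymm h.2.1 (hone ▸ hcard))).subset)

theorem varsC_inter_eq_empty (h : QHcond Q H c) (hp : p ∈ posC c ∩ H) : varsC c ∩ Q = ∅ :=
  h.2.2 (le_antisymm h.2.1 (Finset.card_pos.2 ⟨p, hp⟩))

theorem posC_inter_eq_empty (h : QHcond Q H c) (hp : p ∈ varsC c ∩ Q) : posC c ∩ H = ∅ := by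
  by_contra hne
  obtain ⟨q, hq⟩ := Finset.nonempty_iff_ne_empty.2 hne
  exact Finset.notMem_empty p (h.varsC_inter_eq_empty hq ▸ hp)

theorem res_of_mem_varsC_inter (h : QHcond Q H c) (h' : QHcond Q H c') (hp : p ∈ varsC c ∩ Q)
    (hp' : p ∈ varsC c' ∩ Q) : QHcond Q H (res c c' p) := by
  have hpos : posC (res c c' p) ∩ H = ∅ := by
    simp [posC_res, Finset.union_inter_distrib_right, Finset.erase_inter,
      h.posC_inter_eq_empty hp, h'.posC_inter_eq_empty hp']
  have hvars : (varsC (res c c' p) ∩ Q).card ≤ 2 := by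
    rw [varsC_res, Finset.union_inter_distrib_right, Finset.erase_inter, Finset.erase_inter]
    refine (Finset.card_union_le _ _).trans ?_
    rw [Finset.card_erase_of_mem hp, Finset.card_erase_of_mem hp']
    have := h.1
    have := h'.1
    lia
  exact ⟨hvars, by simp [hpos], by simp [hpos]⟩

theorem res_of_mem_posC_inter (h : QHcond Q H c) (h' : QHcond Q H c') (hp : p ∈ posC c ∩ H) :
    QHcond Q H (res c c' p) := by
  have hpos : (posC c ∩ H).erase p = ∅ := by
    rw [← Finset.card_eq_zero, Finset.card_erase_of_mem hp]
    exact Nat.sub_eq_zero_of_le h.2.1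
  refine h'.of_subset ?_ ?_
  · rw [varsC_res, Finset.union_inter_distrib_right, Finset.erase_inter, Finset.erase_inter,
      h.varsC_inter_eq_empty hp, Finset.erase_empty, Finset.empty_union]
    exact Finset.erase_subset _ _
  · rw [posC_res, Finset.union_inter_distrib_right, Finset.erase_inter, Finset.erase_inter,
      hpos, Finset.empty_union]
    exact Finset.erase_subset _ _

end QHcond

/-- A clause over the atoms `Q ∪ H` satisfying the QH-conditions. Unlike in a QH-partition, `Q` and
`H` may overlap and may contain atoms that do not occur in the theory at hand, which makes the
class of these clauses independent of the theory. -/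
def IsQHClause (Q H : Finset β) (c : Clause β) : Prop := varsC c ⊆ Q ∪ H ∧ QHcond Q H c

theorem resolutionClosed_isQHClause (Q H : Finset β) : ResolutionClosed (IsQHClause Q H) := by
  rintro c c' p hpos hneg' ⟨hsub, hc⟩ ⟨hsub', hc'⟩
  have hp : p ∈ varsC c := mem_varsC.2 ⟨true, hpos⟩
  have hp' : p ∈ varsC c' := mem_varsC.2 ⟨false, hneg'⟩
  constructor
  · rw [varsC_res]
    exact Finset.union_subset ((Finset.erase_subset _ _).trans hsub)
      ((Finset.erase_subset _ _).trans hsub')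
  · rcases Finset.mem_union.1 (hsub hp) with hQ | hH
    · exact hc.res_of_mem_varsC_inter hc' (Finset.mem_inter.2 ⟨hp, hQ⟩)
        (Finset.mem_inter.2 ⟨hp', hQ⟩)
    · exact hc.res_of_mem_posC_inter hc' (Finset.mem_inter.2 ⟨mem_posC.2 hpos, hH⟩)

theorem res_comm (c c' : Clause β) (p : β) : res c c' p = res c' c p := by
  rw [res, res, Finset.union_comm]

theorem mem_renClause {b : Bool} :
    (p, b) ∈ renClause W c ↔ (p, if p ∈ W then !b else b) ∈ c := by
  have hinv : Function.Involutive (renLit W) := by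
    rintro ⟨q, b⟩
    by_cases hq : q ∈ W <;> simp [renLit, hq]
  rw [renClause, ← Finset.mem_coe, Finset.coe_image, hinv.image_eq_preimage_symm]
  by_cases hp : p ∈ W <;> simp [renLit, hp]

theorem renClause_res (W : Finset β) (c c' : Clause β) (p : β) :
    renClause W (res c c' p) = res (renClause W c) (renClause W c') p := by
  ext ⟨q, b⟩
  simp only [mem_renClause, mem_res]

theorem ResolutionClosed.comp_renClause {C : Clause β → Prop} (hC : ResolutionClosed C)
    (W : Finset β) : ResolutionClosed fun c => C (renClause W c) := by
  intro c c' p hpos hneg' hc hc'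
  rw [renClause_res]
  by_cases hp : p ∈ W
  · rw [res_comm]
    exact hC (by simpa [mem_renClause, hp] using hneg') (by simpa [mem_renClause, hp] using hpos)
      hc' hc
  · exact hC (by simpa [mem_renClause, hp] using hpos) (by simpa [mem_renClause, hp] using hneg')
      hc hc'

end ResolutionClosed

section Expressibility

variable {β : Type*} {T : Finset (Clause β)} {φ : PropForm β}

theorem kromExpressible_iff : KromExpressible φ ↔ ExpressibleBy (fun c => c.card ≤ 2) φ :=
  Iff.rfl

variable [DecidableEq β]

theorem hasQHPartition_iff :
    HasQHPartition T ↔ ∃ Q H : Finset β, ∀ c ∈ T, IsQHClause Q H c := by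
  have varsC_subset : ∀ c ∈ T, varsC c ⊆ varsT T := fun c hc => Finset.le_sup (f := varsC) hc
  constructor
  · rintro ⟨Q, H, -, hunion, h⟩
    exact ⟨Q, H, fun c hc => ⟨hunion ▸ varsC_subset c hc, h c hc⟩⟩
  · rintro ⟨Q, H, h⟩
    refine ⟨varsT T ∩ Q, varsT T \ Q, ?_, ?_, fun c hc => (h c hc).2.of_subset ?_ ?_⟩
    · exact Finset.disjoint_iff_inter_eq_empty.1 (Finset.disjoint_sdiff_inter (varsT T) Q).symm
    · rw [Finset.union_comm, Finset.sdiff_union_inter]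
    · exact Finset.inter_subset_inter_left Finset.inter_subset_right
    · intro q hq
      obtain ⟨hqc, hqQ⟩ := Finset.mem_inter.1 hq
      refine Finset.mem_inter.2 ⟨hqc, ?_⟩
      exact (Finset.mem_union.1 ((h c hc).1 (posC_subset_varsC hqc))).resolve_left
        (Finset.mem_sdiff.1 hqQ).2

theorem hornExpressible_iff : HornExpressible φ ↔ ExpressibleBy HornClause φ :=
  Iff.rfl

theorem renHornExpressible_iff :
    RenHornExpressible φ ↔ ∃ W, ExpressibleBy (fun c => HornClause (renClause W c)) φ := by
  simp only [RenHornExpressible, IsRenHorn, IsHornTheory, renTheory, Finset.forall_mem_image,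
    ExpressibleBy]
  tauto

theorem qHornExpressible_iff :
    QHornExpressible φ ↔ ∃ W Q H, ExpressibleBy (fun c => IsQHClause Q H (renClause W c)) φ := by
  simp only [QHornExpressible, IsQHorn, hasQHPartition_iff, renTheory, Finset.forall_mem_image,
    ExpressibleBy]
  tauto

end Expressibility

theorem forget_preserves_expressibility_general {β : Type*} [DecidableEq β] (φ : PropForm β)
    (V : List β) :
    (HornExpressible φ → HornExpressible (φ.Forget V)) ∧
    (KromExpressible φ → KromExpressible (φ.Forget V)) ∧
    (RenHornExpressible φ → RenHornExpressible (φ.Forget V)) ∧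
    (QHornExpressible φ → QHornExpressible (φ.Forget V)) := by
  rw [hornExpressible_iff, hornExpressible_iff, kromExpressible_iff, kromExpressible_iff,
    renHornExpressible_iff, renHornExpressible_iff, qHornExpressible_iff, qHornExpressible_iff]
  refine ⟨?horn, ?krom, ?renHorn, ?qHorn⟩
  case horn => exact .forget resolutionClosed_hornClause V
  case krom => exact .forget resolutionClosed_card_le_two V
  case renHorn =>
    rintro ⟨W, h⟩
    exact ⟨W, h.forget (resolutionClosed_hornClause.comp_renClause W) V⟩
  case qHorn =>
    rintro ⟨W, Q, H, h⟩
    exact ⟨W, Q, H, h.forget ((resolutionClosed_isQHClause Q H).comp_renClause W) V⟩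

/-- If a CNF theory `Σ` is Horn (resp. Krom, renamable-Horn, q-Horn)
expressible, then `Forget(Σ, V)` is Horn (resp. Krom, renamable-Horn, q-Horn)
expressible. -/
theorem forget_preserves_expressibility
    (S : Finset (Clause α)) (hS : ∀ c ∈ S, IsClause c) (V : List α) :
    (HornExpressible (cnfToForm S) →
      HornExpressible (PropForm.Forget (cnfToForm S) V)) ∧
    (KromExpressible (cnfToForm S) →
      KromExpressible (PropForm.Forget (cnfToForm S) V)) ∧
    (RenHornExpressible (cnfToForm S) →
      RenHornExpressible (PropForm.Forget (cnfToForm S) V)) ∧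
    (QHornExpressible (cnfToForm S) →
      QHornExpressible (PropForm.Forget (cnfToForm S) V)) :=
  forget_preserves_expressibility_general (cnfToForm S) V
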